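/- Let 0 < c₁ < c₂ < ∞, let r ≥ 0 and let ε ∈ (0, c₁). Then there exist real numbers λ ∈ (0,ε) and μ such that λ²·( Φ₂((r+μ)/c₂) − Φ₂(μ/c₁) ) = Φ₂(r+μ) − Φ₂(μ), where Φ₂(y) = y·|y|. -/

import Mathlib

/-!
The map `φ y = y * |y|` is a multiplicative bijection of `ℝ`. Writing `dᵢ = φ cᵢ`, the equation
becomes `d₁ * (d₂ - lam ^ 2) * φ (r + μ) = d₂ * (d₁ - lam ^ 2) * φ μ`, with distinct coefficients.
An equation `a * φ (r + μ) = b * φ μ` with `a ≠ b` and `a ≠ 0` is solved by picking `s` with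
`φ s = b / a`, so that `s ≠ 1`, and then `μ` with `r + μ = s * μ`.
-/

theorem exists_mul_map_add_eq_mul_map {L G : Type*} [DivisionRing L] [GroupWithZero G]
    {φ : L →*₀ G} (hφ : Function.Surjective φ) {a b : G} (hab : a ≠ b) (r : L) :
    ∃ μ : L, a * φ (r + μ) = b * φ μ := by
  rcases eq_or_ne a 0 with rfl | ha
  · exact ⟨0, by rw [zero_mul, map_zero, mul_zero]⟩
  obtain ⟨s, hs⟩ := hφ (a⁻¹ * b)
  have hs_ne_one : s ≠ 1 := by
    rintro rfl
    rw [map_one, eq_comm, inv_mul_eq_one₀ ha] at hs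
    exact hab hs
  obtain ⟨μ, hμ⟩ : ∃ μ : L, r + μ = s * μ := by
    refine ⟨(s - 1)⁻¹ * r, ?_⟩
    rw [← eq_sub_iff_add_eq, ← sub_one_mul, mul_inv_cancel_left₀ (sub_ne_zero.mpr hs_ne_one)]
  exact ⟨μ, by rw [hμ, map_mul, hs, ← mul_assoc, mul_inv_cancel_left₀ ha]⟩

theorem exists_mul_map_div_sub_map_div_eq {L K : Type*} [DivisionRing L] [Field K]
    {φ : L →*₀ K} (hφ : Function.Bijective φ) {c₁ c₂ : L} (hc₁ : c₁ ≠ 0) (hc₂ : c₂ ≠ 0)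
    (hc : c₁ ≠ c₂) {k : K} (hk : k ≠ 0) (r : L) :
    ∃ μ : L, k * (φ ((r + μ) / c₂) - φ (μ / c₁)) = φ (r + μ) - φ μ := by
  have hd₁ : φ c₁ ≠ 0 := (map_ne_zero φ).mpr hc₁
  have hd₂ : φ c₂ ≠ 0 := (map_ne_zero φ).mpr hc₂
  have hcoeff : φ c₁ * (φ c₂ - k) ≠ φ c₂ * (φ c₁ - k) := by
    intro h
    have hk_mul : k * φ c₁ = k * φ c₂ := by linear_combination -h
    exact hc (hφ.injective (mul_left_cancel₀ hk hk_mul))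
  obtain ⟨μ, hμ⟩ := exists_mul_map_add_eq_mul_map hφ.surjective hcoeff r
  refine ⟨μ, ?_⟩
  rw [map_div₀, map_div₀]
  field_simp
  linear_combination -hμ

/-- The signed square `y ↦ y * |y|`, written `Φ₂` in the paper, bundled as a homomorphism because
its multiplicativity is what reduces the equation to a linear one. -/
@[simps]
def signedSq (R : Type*) [CommRing R] [LinearOrder R] [IsStrictOrderedRing R] : R →*₀ R where
  toFun y := y * |y|
  map_zero' := zero_mul _
  map_one' := by rw [abs_one, mul_one]
  map_mul' y z := by rw [abs_mul, mul_mul_mul_comm]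

theorem signedSq_injective (R : Type*) [CommRing R] [LinearOrder R] [IsStrictOrderedRing R] :
    Function.Injective (signedSq R) := by
  intro y z h
  rw [signedSq_apply, signedSq_apply] at h
  have habs : |y| = |z| := by
    have hmul : |y| * |y| = |z| * |z| := by simpa only [abs_mul, abs_abs] using congrArg abs h
    exact (mul_self_inj (abs_nonneg y) (abs_nonneg z)).mp hmul
  rcases eq_or_ne z 0 with rfl | hz
  · rwa [abs_zero, abs_eq_zero] at habs
  · rw [habs] at h
    exact mul_right_cancel₀ (abs_ne_zero.mpr hz) h

theorem signedSq_real_surjective : Function.Surjective (signedSq ℝ) := by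
  intro y
  rcases le_total 0 y with hy | hy
  · exact ⟨√y, by rw [signedSq_apply, abs_of_nonneg (Real.sqrt_nonneg y), Real.mul_self_sqrt hy]⟩
  · refine ⟨-√(-y), ?_⟩
    rw [signedSq_apply, abs_neg, abs_of_nonneg (Real.sqrt_nonneg _), neg_mul,
      Real.mul_self_sqrt (neg_nonneg.mpr hy), neg_neg]

theorem stmt18_general {c₁ c₂ : ℝ} (hc₁ : c₁ ≠ 0) (hc₂ : c₂ ≠ 0) (hc : c₁ ≠ c₂) {lam : ℝ}
    (hlam : lam ≠ 0) (r : ℝ) :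
    ∃ μ : ℝ, lam ^ 2 * (((r + μ) / c₂) * |(r + μ) / c₂| - (μ / c₁) * |μ / c₁|) =
      (r + μ) * |r + μ| - μ * |μ| :=
  exists_mul_map_div_sub_map_div_eq ⟨signedSq_injective ℝ, signedSq_real_surjective⟩ hc₁ hc₂ hc
    (pow_ne_zero 2 hlam) r

/-- for `0 < c₁ < c₂ < ∞`, `r ≥ 0` and `ε ∈ (0,c₁)` there exist `λ ∈ (0,ε)`
and `μ ∈ ℝ` with `λ²·(Φ₂((r+μ)/c₂) − Φ₂(μ/c₁)) = Φ₂(r+μ) − Φ₂(μ)`, where `Φ₂(y) = y·|y|`. -/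
theorem stmt18 (c₁ c₂ r ε : ℝ) (hc₁ : 0 < c₁) (hcc : c₁ < c₂) (hr : 0 ≤ r)
    (hε : 0 < ε) (hε' : ε < c₁) :
    ∃ lam μ : ℝ, 0 < lam ∧ lam < ε ∧
      lam ^ 2 * (((r + μ) / c₂) * |(r + μ) / c₂| - (μ / c₁) * |μ / c₁|) =
        (r + μ) * |r + μ| - μ * |μ| := by
  obtain ⟨μ, hμ⟩ := stmt18_general hc₁.ne' (hc₁.trans hcc).ne' hcc.ne (half_pos hε).ne' r
  exact ⟨ε / 2, μ, half_pos hε, half_lt_self hε, hμ⟩
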